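/- Let f : ℝ → ℂ be Bohr almost periodic. If the Fourier coefficient \hat f(ω) = 0 for every ω ∈ ℝ, then f(x) = 0 for all x ∈ ℝ. Equivalently, two Bohr almost periodic functions with the same Fourier coefficients at every frequency are equal. -/

import Mathlib

/-! The proof goes through periodization. Suppose all Fourier coefficients of `f` vanish but
`f x₀ ≠ 0`.

* `mean_uniform_freq`: `T⁻¹ ∫ t in 0..T, f t * exp (-2πiωt)` tends to `0` as `T → ∞` uniformly in
  `ω`. High frequencies are handled by translating `f` by half a period of the character; on a
  compact set of frequencies, almost periodicity makes the mean uniform in the position of the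
  window, so that a bound at one frequency spreads to its neighbours by cutting `[0, T]` into blocks.
* Take a large almost period `T` of `f` and let `F` be the `T`-periodic function equal to `f` on
  `[0, T)`. Its Fourier coefficients `a n` are at most `ε`. The autocorrelation
  `G x = ∫ conj (F t) * F (t + x)` is `∑ ‖a n‖ ^ 2 * fourier n x`, so by Parseval
  `∫ ‖G‖ ^ 2 = ∑ ‖a n‖ ^ 4 ≤ ε ^ 2 * ‖F‖₂ ^ 2`, which is arbitrarily small (`circle_corr`).
* At an almost period `s` of `f`, `G s` is close to `G 0 = ∫ ‖F‖ ^ 2`, which is bounded below because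
  `f` is large near `x₀` and near its translates by almost periods. Almost periods fill a set of
  positive lower density, so `∫ ‖G‖ ^ 2` is bounded below independently of `T`, a contradiction
  (`eq_zero_of_coeff_zero`).

The statement for two functions follows by applying this to `f - g`, which is almost periodic
because `f` and `g` have common almost periods (`BohrAP.sub`). -/

open MeasureTheory Filter Topology
open scoped ENNReal NNReal

noncomputable section

/-- `f : ℝ → ℂ` is Bohr almost periodic. -/
def BohrAP (f : ℝ → ℂ) : Prop :=
  Continuous f ∧ ∀ ε : ℝ, 0 < ε → ∃ L : ℝ, 0 < L ∧ ∀ a : ℝ,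
    ∃ τ, τ ∈ Set.Icc a (a + L) ∧ ∀ x : ℝ, ‖f (x - τ) - f x‖ < ε

/-- The Fourier coefficient of `f` at frequency `ω` equals `c`. -/
def HasFourierCoeff (f : ℝ → ℂ) (ω : ℝ) (c : ℂ) : Prop :=
  Tendsto (fun L : ℝ => (2 * (L : ℂ))⁻¹ *
      ∫ x in (-L)..L, f x * Complex.exp (((-(2 * Real.pi * ω * x) : ℝ) : ℂ) * Complex.I))
    atTop (nhds c)

/-- `f'` is a weak derivative of `f` on `ℝ`. -/
def HasWeakDeriv (f f' : ℝ → ℂ) : Prop :=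
  LocallyIntegrable f' volume ∧ ∀ x : ℝ, f x = f 0 + ∫ y in (0:ℝ)..x, f' y

/-- The `S^{1,2}(ℝ)`-norm of `f` (with weak derivative `f'`), valued in `ℝ≥0∞`. -/
def S12 (f f' : ℝ → ℂ) : ℝ≥0∞ :=
  ⨆ y : ℝ, (∫⁻ x in Set.Ioc y (y + 1),
    ((‖f x‖₊ : ℝ≥0∞) ^ 2 + (‖f' x‖₊ : ℝ≥0∞) ^ 2)) ^ (1/2 : ℝ)

/-- The averaging operator `A_{n,L}[f]`. -/
def avgOp (f : ℝ → ℂ) (L : ℝ) (n : ℕ) (x : ℝ) : ℂ :=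
  (n : ℂ)⁻¹ * ∑ m ∈ Finset.range n, f (x + m * L)

/-- `f` is limit periodic: a uniform limit of continuous periodic functions. -/
def LimitPeriodic (f : ℝ → ℂ) : Prop :=
  ∃ g : ℕ → ℝ → ℂ, (∀ j, Continuous (g j)) ∧
    (∀ j, ∃ P : ℝ, 0 < P ∧ Function.Periodic (g j) P) ∧
    TendstoUniformly g f atTop

/-! ### Characters -/

/-- The character `t ↦ exp (-2πiωt)` of `ℝ`, written as in the definition of `HasFourierCoeff`. -/
def ex (ω t : ℝ) : ℂ := Complex.exp (((-(2 * Real.pi * ω * t) : ℝ) : ℂ) * Complex.I)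

lemma norm_ex (ω t : ℝ) : ‖ex ω t‖ = 1 := Complex.norm_exp_ofReal_mul_I _

lemma continuous_ex (ω : ℝ) : Continuous (ex ω) := by
  unfold ex; fun_prop

lemma ex_add (ω s t : ℝ) : ex ω (s + t) = ex ω s * ex ω t := by
  unfold ex; rw [← Complex.exp_add]; congr 1; push_cast; ring

lemma ex_add_freq (ω η t : ℝ) : ex (ω + η) t = ex ω t * ex η t := by
  unfold ex; rw [← Complex.exp_add]; congr 1; push_cast; ring

lemma norm_ex_sub_one_le (η t : ℝ) : ‖ex η t - 1‖ ≤ 2 * Real.pi * |η| * |t| := by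
  have := Real.norm_exp_I_mul_ofReal_sub_one_le (x := -(2 * Real.pi * η * t))
  rw [mul_comm] at this
  refine this.trans (le_of_eq ?_)
  rw [norm_neg, norm_mul, norm_mul, norm_mul]
  simp [abs_of_pos Real.pi_pos]

lemma ex_half_period {ω : ℝ} (hω : ω ≠ 0) : ex ω (1 / (2 * |ω|)) = -1 := by
  rcases lt_or_gt_of_ne hω with h | h
  · have : (-(2 * Real.pi * ω * (1 / (2 * |ω|))) : ℝ) = Real.pi := by
      rw [abs_of_neg h]; field_simp
    rw [ex, this, Complex.exp_pi_mul_I]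
  · have : (-(2 * Real.pi * ω * (1 / (2 * |ω|))) : ℝ) = -Real.pi := by
      rw [abs_of_pos h]; field_simp
    rw [ex, this]
    push_cast
    rw [neg_mul, Complex.exp_neg, Complex.exp_pi_mul_I]; norm_num

/-! ### Boundedness and uniform continuity -/

lemma BohrAP.exists_bound {f : ℝ → ℂ} (hf : BohrAP f) : ∃ M, 0 < M ∧ ∀ x, ‖f x‖ ≤ M := by
  obtain ⟨L, hL, h⟩ := hf.2 1 one_pos
  obtain ⟨C, hC⟩ := (isCompact_Icc (a := -L) (b := 0)).exists_bound_of_continuousOn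
    hf.1.continuousOn
  refine ⟨|C| + 1, by positivity, fun x => ?_⟩
  obtain ⟨τ, hτ, hx⟩ := h x
  have h1 := hC (x - τ) ⟨by linarith [hτ.2], by linarith [hτ.1]⟩
  have h2 := hx x
  have h3 := norm_sub_norm_le (f x) (f (x - τ))
  rw [norm_sub_rev] at h3
  linarith [le_abs_self C]

lemma BohrAP.uniform_cont {f : ℝ → ℂ} (hf : BohrAP f) {ε : ℝ} (hε : 0 < ε) :
    ∃ δ, 0 < δ ∧ δ ≤ 1 ∧ ∀ s, 0 ≤ s → s ≤ δ → ∀ x, ‖f (x + s) - f x‖ ≤ ε := by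
  obtain ⟨L, hL, h⟩ := hf.2 (ε / 3) (by positivity)
  have huc := (isCompact_Icc (a := -L) (b := 1)).uniformContinuousOn_of_continuous
    hf.1.continuousOn
  rw [Metric.uniformContinuousOn_iff] at huc
  obtain ⟨δ, hδ, hu⟩ := huc (ε / 3) (by positivity)
  refine ⟨min (δ / 2) 1, by positivity, min_le_right _ _, fun s hs0 hs x => ?_⟩
  have hsδ : s < δ := by linarith [min_le_left (δ / 2) 1]
  have hs1 : s ≤ 1 := hs.trans (min_le_right _ _)
  obtain ⟨τ, hτ, hx⟩ := h x
  have h1 := hu (x - τ + s) ⟨by linarith [hτ.2], by linarith [hτ.1]⟩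
    (x - τ) ⟨by linarith [hτ.2], by linarith [hτ.1]⟩ (by
      rw [Real.dist_eq]; simpa [abs_of_nonneg hs0] using hsδ)
  rw [dist_eq_norm] at h1
  have h2 := hx x
  have h3 := hx (x + s)
  have e1 : x + s - τ = x - τ + s := by ring
  rw [e1] at h3
  calc ‖f (x + s) - f x‖
      = ‖(f (x - τ) - f x) - (f (x - τ + s) - f (x + s)) + (f (x - τ + s) - f (x - τ))‖ := by
        congr 1; ring
    _ ≤ ‖f (x - τ) - f x‖ + ‖f (x - τ + s) - f (x + s)‖ + ‖f (x - τ + s) - f (x - τ)‖ :=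
        (norm_add_le _ _).trans (by gcongr; exact norm_sub_le _ _)
    _ ≤ ε := by linarith

/-- Almost periods come in whole intervals `[τ, τ + δ]`. -/
lemma BohrAP.fat_almost_periods {f : ℝ → ℂ} (hf : BohrAP f) {ε : ℝ} (hε : 0 < ε) :
    ∃ l δ, 0 < l ∧ 0 < δ ∧ δ ≤ 1 ∧ ∀ a, ∃ τ, a ≤ τ ∧ τ ≤ a + l ∧
      ∀ s, τ ≤ s → s ≤ τ + δ → ∀ x, ‖f (x + s) - f x‖ ≤ ε := by
  obtain ⟨l, hl, h⟩ := hf.2 (ε / 2) (by positivity)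
  obtain ⟨δ, hδ, hδ1, hu⟩ := hf.uniform_cont (ε := ε / 2) (by positivity)
  refine ⟨l, δ, hl, hδ, hδ1, fun a => ?_⟩
  obtain ⟨τ, hτ, hx⟩ := h a
  refine ⟨τ, hτ.1, hτ.2, fun s hs hs' x => ?_⟩
  have h1 := hx (x + s)
  have h2 := hu (s - τ) (by linarith) (by linarith) x
  have e1 : x + s - τ = x + (s - τ) := by ring
  rw [e1] at h1
  calc ‖f (x + s) - f x‖
      = ‖(f (x + (s - τ)) - f x) - (f (x + (s - τ)) - f (x + s))‖ := by congr 1; ring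
    _ ≤ _ := norm_sub_le _ _
    _ ≤ ε := by linarith

/-! ### Mean values -/

lemma norm_integral_le_mul {h : ℝ → ℂ} {C a b : ℝ} (hab : a ≤ b)
    (hC : ∀ t, ‖h t‖ ≤ C) : ‖∫ t in a..b, h t‖ ≤ C * (b - a) := by
  have := intervalIntegral.norm_integral_le_of_norm_le_const (a := a) (b := b) (f := h) (C := C)
    (fun x _ => hC x)
  rwa [abs_of_nonneg (by linarith)] at this

/-- If all averages of `h` over intervals of length `B` are at most `c`, then the averages over long
intervals are at most `c`, up to an error from the last incomplete block. -/
lemma norm_integral_le_of_blocks {h : ℝ → ℂ} (hc : Continuous h) {M B c : ℝ} (hB : 0 < B)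
    (hM : ∀ t, ‖h t‖ ≤ M) (hb : ∀ a, ‖∫ t in a..a + B, h t‖ ≤ c * B) {T : ℝ} (hT : 0 ≤ T) :
    ‖∫ t in (0 : ℝ)..T, h t‖ ≤ c * T + M * B := by
  have hc0 : 0 ≤ c := by
    have := (norm_nonneg _).trans (hb 0)
    exact nonneg_of_mul_nonneg_left this hB
  have hM0 : 0 ≤ M := (norm_nonneg _).trans (hM 0)
  have hN : ∀ N : ℕ, ‖∫ t in (0 : ℝ)..N * B, h t‖ ≤ c * (N * B) := by
    intro N
    induction N with
    | zero => simp
    | succ N ih =>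
      rw [← intervalIntegral.integral_add_adjacent_intervals (b := N * B)
        (hc.intervalIntegrable _ _) (hc.intervalIntegrable _ _)]
      refine (norm_add_le _ _).trans ?_
      have := hb (N * B)
      push_cast
      rw [show ((N : ℝ) + 1) * B = N * B + B by ring]
      linarith
  set N := ⌊T / B⌋₊
  have h1 : N * B ≤ T := by
    rw [← le_div_iff₀ hB]; exact Nat.floor_le (by positivity)
  have h2 : T ≤ N * B + B := by
    have := (Nat.lt_floor_add_one (T / B)).le
    rw [div_le_iff₀ hB] at this
    linarith
  rw [← intervalIntegral.integral_add_adjacent_intervals (b := N * B)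
        (hc.intervalIntegrable _ _) (hc.intervalIntegrable _ _)]
  refine (norm_add_le _ _).trans (add_le_add ((hN N).trans ?_)
    ((norm_integral_le_mul h1 hM).trans ?_))
  · gcongr
  · gcongr; linarith

lemma norm_mul_ex (f : ℝ → ℂ) (ω t : ℝ) : ‖f t * ex ω t‖ = ‖f t‖ := by
  rw [norm_mul, norm_ex, mul_one]

/-- At a fixed frequency, the mean value is attained uniformly over the position of the window. -/
lemma mean_uniform_position {f : ℝ → ℂ} (hf : BohrAP f) {ω : ℝ} (h0 : HasFourierCoeff f ω 0)
    {ε : ℝ} (hε : 0 < ε) :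
    ∃ B, 0 < B ∧ ∀ a, ‖∫ t in a..a + B, f t * ex ω t‖ ≤ ε * B := by
  obtain ⟨M, hM0, hM⟩ := hf.exists_bound
  obtain ⟨l, hl, hap⟩ := hf.2 (ε / 4) (by positivity)
  have hcont : Continuous fun t => f t * ex ω t := hf.1.mul (continuous_ex ω)
  have hii : ∀ a b, IntervalIntegrable (fun t => f t * ex ω t) volume a b :=
    fun a b => hcont.intervalIntegrable a b
  have hev := (Metric.tendsto_nhds.1 h0 (ε / 4) (by positivity))
  obtain ⟨L, hL, hL2⟩ := (hev.and (eventually_ge_atTop (2 * l * M / ε + 1))).exists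
  have hLpos : 0 < L := by
    have : 0 ≤ 2 * l * M / ε := by positivity
    linarith
  have hLM : 2 * l * M ≤ ε * L := by
    have : 2 * l * M / ε ≤ L := by linarith
    rw [div_le_iff₀ hε] at this; linarith
  have hcen : ‖∫ t in (-L)..L, f t * ex ω t‖ ≤ ε / 4 * (2 * L) := by
    rw [dist_zero_right, norm_mul, norm_inv, norm_mul, Complex.norm_real, Complex.norm_ofNat,
      Real.norm_of_nonneg hLpos.le] at hL
    have h2L : (0 : ℝ) < 2 * L := by positivity
    rw [inv_mul_lt_iff₀ h2L] at hL
    exact hL.le.trans_eq (mul_comm _ _)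
  refine ⟨2 * L, by positivity, fun a => ?_⟩
  obtain ⟨τ, hτ, hx⟩ := hap (a + L)
  have hb1 : a - τ ≤ -L := by linarith [hτ.1]
  have hb2 : a + 2 * L - τ ≤ L := by linarith [hτ.1]
  -- replace `f` by its translate by the almost period `τ`
  have hshift : ∫ t in a..a + 2 * L, f (t - τ) * ex ω t
      = ex ω τ * ∫ u in (a - τ)..(a + 2 * L - τ), f u * ex ω u := by
    rw [← intervalIntegral.integral_comp_sub_right (fun u => f u * ex ω u) τ,
      ← intervalIntegral.integral_const_mul]
    congr 1; funext t
    have : ex ω t = ex ω τ * ex ω (t - τ) := by rw [← ex_add]; congr 1; ring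
    rw [this]; ring
  have hmove : ‖∫ u in (a - τ)..(a + 2 * L - τ), f u * ex ω u‖ ≤ ε / 4 * (2 * L) + 2 * l * M := by
    have e1 := intervalIntegral.integral_add_adjacent_intervals (hii (a - τ) (-L)) (hii (-L) L)
    have e2 := intervalIntegral.integral_add_adjacent_intervals
      (hii (a - τ) (a + 2 * L - τ)) (hii (a + 2 * L - τ) L)
    have n1 := norm_integral_le_mul hb1 (fun t => (norm_mul_ex f ω t).trans_le (hM t))
    have n2 := norm_integral_le_mul hb2 (fun t => (norm_mul_ex f ω t).trans_le (hM t))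
    have b1 : M * (-L - (a - τ)) ≤ M * l := by gcongr; linarith [hτ.2]
    have b2 : M * (L - (a + 2 * L - τ)) ≤ M * l := by gcongr; linarith [hτ.2]
    rw [eq_sub_of_add_eq (e2.trans e1.symm)]
    refine (norm_sub_le _ _).trans ?_
    have := norm_add_le (∫ u in (a - τ)..(-L), f u * ex ω u) (∫ u in (-L)..L, f u * ex ω u)
    linarith
  have hdiff : ‖∫ t in a..a + 2 * L, (f (t - τ) - f t) * ex ω t‖ ≤ ε / 4 * (2 * L) := by
    have := norm_integral_le_mul (h := fun t => (f (t - τ) - f t) * ex ω t) (a := a)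
      (b := a + 2 * L) (C := ε / 4) (by linarith) (fun t => by
        rw [norm_mul, norm_ex, mul_one]; exact (hx t).le)
    linarith
  have hfin : ∫ t in a..a + 2 * L, f t * ex ω t
      = (∫ t in a..a + 2 * L, f (t - τ) * ex ω t)
        - ∫ t in a..a + 2 * L, (f (t - τ) - f t) * ex ω t := by
    have c1 : Continuous fun t => f (t - τ) := hf.1.comp (continuous_id.sub continuous_const)
    rw [← intervalIntegral.integral_sub]
    · congr 1; funext t; ring
    · exact (c1.mul (continuous_ex ω)).intervalIntegrable _ _
    · exact ((c1.sub hf.1).mul (continuous_ex ω)).intervalIntegrable _ _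
  rw [hfin, hshift]
  refine (norm_sub_le _ _).trans ?_
  rw [norm_mul, norm_ex, one_mul]
  linarith

/-- Uniform smallness of long averages for frequencies near a given one. -/
lemma mean_near_freq {f : ℝ → ℂ} (hf : BohrAP f) {ω₀ : ℝ} (h0 : HasFourierCoeff f ω₀ 0)
    {ε : ℝ} (hε : 0 < ε) :
    ∀ᶠ p : ℝ × ℝ in atTop ×ˢ 𝓝 ω₀, ‖∫ t in (0 : ℝ)..p.1, f t * ex p.2 t‖ ≤ ε * p.1 := by
  obtain ⟨M, hM0, hM⟩ := hf.exists_bound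
  obtain ⟨B, hB, hblock⟩ := mean_uniform_position hf h0 (ε := ε / 4) (by positivity)
  have hη : 0 < ε / (8 * Real.pi * B * M) := by have := Real.pi_pos; positivity
  filter_upwards [(eventually_ge_atTop (2 * B * M / ε)).prod_mk
    (Metric.closedBall_mem_nhds ω₀ hη)] with ⟨T, ω⟩ ⟨hT, hω⟩
  simp only at hT ⊢
  change dist ω ω₀ ≤ _ at hω
  rw [Real.dist_eq] at hω
  have hT0 : 0 ≤ T := le_trans (by positivity) hT
  have hTM : M * B ≤ ε / 2 * T := by
    rw [div_le_iff₀ hε] at hT; linarith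
  have hcont : ∀ ω, Continuous fun t => f t * ex ω t := fun ω => hf.1.mul (continuous_ex ω)
  refine (norm_integral_le_of_blocks (c := ε / 2) (hcont ω) hB
    (fun t => (norm_mul_ex f ω t).trans_le (hM t)) (fun a => ?_) hT0).trans (by linarith)
  have hpt : ∀ t, f t * ex ω t = ex (ω - ω₀) a * (f t * ex ω₀ t)
      + f t * ex ω₀ t * ex (ω - ω₀) a * (ex (ω - ω₀) (t - a) - 1) := by
    intro t
    have e1 : ex ω t = ex ω₀ t * ex (ω - ω₀) t := by rw [← ex_add_freq]; congr 1; ring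
    have e2 : ex (ω - ω₀) t = ex (ω - ω₀) a * ex (ω - ω₀) (t - a) := by
      rw [← ex_add]; congr 1; ring
    rw [e1, e2]; ring
  have hc2 : Continuous fun t =>
      f t * ex ω₀ t * ex (ω - ω₀) a * (ex (ω - ω₀) (t - a) - 1) :=
    ((hcont ω₀).mul continuous_const).mul
      (((continuous_ex _).comp (continuous_id.sub continuous_const)).sub continuous_const)
  have hc1 : Continuous fun t => ex (ω - ω₀) a * (f t * ex ω₀ t) :=
    continuous_const.mul (hcont ω₀)
  simp_rw [hpt]
  rw [intervalIntegral.integral_add (hc1.intervalIntegrable _ _)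
    (hc2.intervalIntegrable _ _), intervalIntegral.integral_const_mul]
  refine (norm_add_le _ _).trans ?_
  rw [norm_mul, norm_ex, one_mul]
  have h2 : ‖∫ t in a..a + B, f t * ex ω₀ t * ex (ω - ω₀) a * (ex (ω - ω₀) (t - a) - 1)‖
      ≤ ε / 4 * |a + B - a| := by
    refine intervalIntegral.norm_integral_le_of_norm_le_const fun t ht => ?_
    rw [Set.uIoc_of_le (by linarith)] at ht
    rw [norm_mul, norm_mul, norm_mul_ex, norm_ex, mul_one]
    have hta : |t - a| ≤ B := by
      rw [abs_of_pos (by linarith [ht.1])]; linarith [ht.2]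
    calc ‖f t‖ * ‖ex (ω - ω₀) (t - a) - 1‖
        ≤ M * (2 * Real.pi * (ε / (8 * Real.pi * B * M)) * B) := by
          have := Real.pi_pos
          refine mul_le_mul (hM t) ((norm_ex_sub_one_le _ _).trans ?_) (norm_nonneg _) hM0.le
          gcongr
      _ = ε / 4 := by
          have := Real.pi_pos
          field_simp
          norm_num
  rw [add_sub_cancel_left, abs_of_pos hB] at h2
  linarith [hblock a]

/-- At high frequencies, translating by half a period gives cancellation. -/
lemma mean_high_freq {f : ℝ → ℂ} (hf : BohrAP f) {ε : ℝ} (hε : 0 < ε) :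
    ∃ R, 0 < R ∧ ∀ᶠ T : ℝ in atTop, ∀ ω : ℝ, R ≤ |ω| →
      ‖∫ t in (0 : ℝ)..T, f t * ex ω t‖ ≤ ε * T := by
  obtain ⟨M, hM0, hM⟩ := hf.exists_bound
  obtain ⟨δ, hδ, -, hu⟩ := hf.uniform_cont hε
  refine ⟨1 / (2 * δ), by positivity, ?_⟩
  filter_upwards [eventually_ge_atTop (2 * M * δ / ε)] with T hT ω hω
  have hT0 : 0 ≤ T := le_trans (by positivity) hT
  rw [div_le_iff₀ hε] at hT
  have hω0 : 0 < |ω| := lt_of_lt_of_le (by positivity) hω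
  set s := 1 / (2 * |ω|) with hs
  have hs0 : 0 < s := by positivity
  have hsδ : s ≤ δ := by
    rw [hs, div_le_iff₀ (by positivity)]
    rw [div_le_iff₀ (by positivity)] at hω
    linarith
  have hcont : Continuous fun t => f t * ex ω t := hf.1.mul (continuous_ex ω)
  have hii : ∀ a b, IntervalIntegrable (fun t => f t * ex ω t) volume a b :=
    fun a b => hcont.intervalIntegrable a b
  have c1 : Continuous fun t => f (t + s) := hf.1.comp (continuous_id.add continuous_const)
  have hshift : ∫ t in (0 : ℝ)..T, f (t + s) * ex ω t
      = - ∫ u in (0 + s)..(T + s), f u * ex ω u := by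
    rw [← intervalIntegral.integral_comp_add_right (fun u => f u * ex ω u) s,
      ← intervalIntegral.integral_neg]
    congr 1; funext t
    rw [ex_add, ex_half_period (abs_pos.1 hω0)]; ring
  have hsub : ∫ t in (0 : ℝ)..T, (f (t + s) - f t) * ex ω t
      = (∫ t in (0 : ℝ)..T, f (t + s) * ex ω t) - ∫ t in (0 : ℝ)..T, f t * ex ω t := by
    have c2 : Continuous fun t => f (t + s) * ex ω t := c1.mul (continuous_ex ω)
    rw [← intervalIntegral.integral_sub (c2.intervalIntegrable _ _) (hii _ _)]
    congr 1; funext t; ring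
  have hdiff : ‖∫ t in (0 : ℝ)..T, (f (t + s) - f t) * ex ω t‖ ≤ ε * (T - 0) :=
    norm_integral_le_mul hT0 fun t => by
      rw [norm_mul, norm_ex, mul_one]; exact hu s hs0.le hsδ t
  have e1 := intervalIntegral.integral_add_adjacent_intervals (hii 0 (0 + s)) (hii (0 + s) (T + s))
  have e2 := intervalIntegral.integral_add_adjacent_intervals (hii 0 T) (hii T (T + s))
  have n1 := norm_integral_le_mul (h := fun t => f t * ex ω t) (C := M) (a := 0) (b := 0 + s)
    (by linarith) (fun t => (norm_mul_ex f ω t).trans_le (hM t))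
  have n2 := norm_integral_le_mul (h := fun t => f t * ex ω t) (C := M) (a := T) (b := T + s)
    (by linarith) (fun t => (norm_mul_ex f ω t).trans_le (hM t))
  have key : 2 * (∫ t in (0 : ℝ)..T, f t * ex ω t)
      = (∫ t in (0 : ℝ)..(0 + s), f t * ex ω t) - (∫ t in T..(T + s), f t * ex ω t)
        - ∫ t in (0 : ℝ)..T, (f (t + s) - f t) * ex ω t := by
    rw [hsub, hshift]
    linear_combination e2 - e1
  have hn : 2 * ‖∫ t in (0 : ℝ)..T, f t * ex ω t‖ ≤ M * s + M * s + ε * T := by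
    have : ‖2 * (∫ t in (0 : ℝ)..T, f t * ex ω t)‖ = 2 * ‖∫ t in (0 : ℝ)..T, f t * ex ω t‖ := by
      rw [norm_mul, Complex.norm_ofNat]
    rw [← this, key]
    refine (norm_sub_le _ _).trans (add_le_add ((norm_sub_le _ _).trans (add_le_add ?_ ?_)) ?_)
    · linarith
    · linarith
    · linarith
  have : M * s ≤ M * δ := by gcongr
  linarith

/-- If all Fourier coefficients vanish, long averages of `f` against characters are small uniformly
in the frequency. -/
lemma mean_uniform_freq {f : ℝ → ℂ} (hf : BohrAP f) (h0 : ∀ ω, HasFourierCoeff f ω 0)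
    {ε : ℝ} (hε : 0 < ε) :
    ∀ᶠ T : ℝ in atTop, ∀ ω : ℝ, ‖∫ t in (0 : ℝ)..T, f t * ex ω t‖ ≤ ε * T := by
  obtain ⟨R, -, hR⟩ := mean_high_freq hf hε
  have hcpt : ∀ᶠ T : ℝ in atTop, ∀ ω ∈ Set.Icc (-R) R,
      ‖∫ t in (0 : ℝ)..T, f t * ex ω t‖ ≤ ε * T := by
    refine (isCompact_Icc (a := -R) (b := R)).induction_on
      (p := fun K => ∀ᶠ T : ℝ in atTop, ∀ ω ∈ K, ‖∫ t in (0 : ℝ)..T, f t * ex ω t‖ ≤ ε * T)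
      (by simp) (fun s t hst ht => ht.mono fun T hT ω hω => hT ω (hst hω))
      (fun s t hs ht => ?_) (fun ω₀ _ => ?_)
    · filter_upwards [hs, ht] with T h1 h2 ω hω
      exact hω.elim (h1 ω) (h2 ω)
    · obtain ⟨p, hp, q, hq, hpq⟩ := eventually_prod_iff.1 (mean_near_freq hf (h0 ω₀) hε)
      exact ⟨{ω | q ω}, mem_nhdsWithin_of_mem_nhds hq, hp.mono fun T hT ω hω => hpq hT hω⟩
  filter_upwards [hR, hcpt] with T h1 h2 ω
  rcases le_total R |ω| with h | h
  · exact h1 ω h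
  · exact h2 ω (abs_le.1 h)


/-! ### Autocorrelation on the circle -/

open scoped ComplexConjugate in
/-- The autocorrelation `G` of `F` has Fourier coefficients `‖a n‖ ^ 2`, where `a n` are those
of `F`. By Parseval its squared `L²` norm is `∑ ‖a n‖ ^ 4 ≤ sup ‖a n‖ ^ 2 * ∑ ‖a n‖ ^ 2`. -/
lemma circle_corr {T : ℝ} [hT : Fact (0 < T)] (F : AddCircle T → ℂ) (hF : Measurable F)
    {M ε : ℝ} (hM : ∀ t, ‖F t‖ ≤ M) (hε : ∀ n, ‖fourierCoeff F n‖ ≤ ε) :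
    ∃ G : C(AddCircle T, ℂ),
      (∀ x, G x = ∫ t, conj (F t) * F (t + x) ∂AddCircle.haarAddCircle) ∧
      ∫ x, ‖G x‖ ^ 2 ∂AddCircle.haarAddCircle ≤ ε ^ 2 * M ^ 2 := by
  have hL : ∀ x : AddCircle T, MemLp (fun t => F (t + x)) 2 AddCircle.haarAddCircle := fun x =>
    MemLp.of_bound (hF.comp (measurable_id.add_const x)).aestronglyMeasurable M
      (ae_of_all _ fun t => hM _)
  have hL0 : MemLp F 2 AddCircle.haarAddCircle :=
    MemLp.of_bound hF.aestronglyMeasurable M (ae_of_all _ fun t => hM _)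
  set a := fourierCoeff F with ha
  have hrepr : ∀ n, fourierCoeff (hL0.toLp F) n = a n := fun n => by
    rw [fourierCoeff_congr_ae hL0.coeFn_toLp]
  have hsum2 := hasSum_sq_fourierCoeff (hL0.toLp F)
  simp only [hrepr] at hsum2
  have hle2 : ∑' n, ‖a n‖ ^ 2 ≤ M ^ 2 := by
    rw [hsum2.tsum_eq]
    calc _ ≤ ∫ t : AddCircle T, M ^ 2 ∂AddCircle.haarAddCircle := by
          refine integral_mono_of_nonneg (ae_of_all _ fun t => by positivity)
            (integrable_const _) ?_
          filter_upwards [hL0.coeFn_toLp] with t ht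
          rw [ht]
          exact pow_le_pow_left₀ (norm_nonneg _) (hM t) 2
      _ = M ^ 2 := by simp
  have hs2 := hsum2.summable
  have hsum : Summable (fun n : ℤ => ((‖a n‖ ^ 2 : ℝ) : ℂ) • (fourier n : C(AddCircle T, ℂ))) := by
    refine Summable.of_norm ?_
    simpa [norm_smul, fourier_norm] using hs2
  obtain ⟨G, hG⟩ := hsum
  -- the Fourier coefficients of the series are the squares `‖a n‖ ^ 2`
  have hcoef : ∀ m, fourierCoeff (ContinuousMap.toLp (E := ℂ) 2 AddCircle.haarAddCircle ℂ G) m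
      = ((‖a m‖ ^ 2 : ℝ) : ℂ) := by
    intro m
    rw [← fourierBasis_repr, HilbertBasis.repr_apply_apply, coe_fourierBasis]
    have h1 := (hG.mapL (ContinuousMap.toLp (E := ℂ) 2 AddCircle.haarAddCircle ℂ)).mapL
      (innerSL ℂ (fourierLp (T := T) 2 m))
    refine h1.unique ?_
    have h2 : (fun n : ℤ => innerSL ℂ (fourierLp (T := T) 2 m)
        (ContinuousMap.toLp (E := ℂ) 2 AddCircle.haarAddCircle ℂ
          (((‖a n‖ ^ 2 : ℝ) : ℂ) • (fourier n : C(AddCircle T, ℂ)))))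
        = fun n => if n = m then ((‖a m‖ ^ 2 : ℝ) : ℂ) else 0 := by
      funext n
      have := (orthonormal_iff_ite.1 (orthonormal_fourier (T := T))) m n
      rw [map_smul, map_smul]
      change _ • inner ℂ (fourierLp (T := T) 2 m) (fourierLp (T := T) 2 n) = _
      rw [this]
      by_cases h : n = m
      · subst h; simp
      · simp [h, Ne.symm h]
    rw [h2]
    exact hasSum_ite_eq m _
  refine ⟨G, fun x => ?_, ?_⟩
  · have h1 : HasSum (fun n : ℤ => ((‖a n‖ ^ 2 : ℝ) : ℂ) * fourier n x) (G x) := by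
      simpa using ContinuousMap.hasSum_apply hG x
    have h2 := (fourierBasis (T := T)).hasSum_inner_mul_inner (hL0.toLp F) ((hL x).toLp _)
    have h3 : ∀ n, inner ℂ (fourierBasis (T := T) n) ((hL x).toLp _) = fourier n x * a n := by
      intro n
      rw [← HilbertBasis.repr_apply_apply, fourierBasis_repr,
        fourierCoeff_congr_ae (hL x).coeFn_toLp, ha, fourierCoeff, fourierCoeff,
        ← integral_const_mul,
        ← integral_add_right_eq_self (μ := AddCircle.haarAddCircle)
          (fun t => fourier n x * (fourier (-n) t • F t)) x]
      congr 1
      funext t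
      have : (fourier (-n) (t + x) : ℂ) = fourier (-n) t * fourier (-n) x := by
        simp only [fourier_apply, smul_add, AddCircle.toCircle_add, Circle.coe_mul]
      have h' : (fourier n x : ℂ) * fourier (-n) x = 1 := by
        rw [← fourier_add]; simp
      rw [this, smul_eq_mul, smul_eq_mul]
      linear_combination (- (fourier (-n) t) * F (t + x)) * h'
    have h4 : ∀ n, inner ℂ (hL0.toLp F) (fourierBasis (T := T) n) = conj (a n) := by
      intro n
      rw [← inner_conj_symm, ← HilbertBasis.repr_apply_apply, fourierBasis_repr, hrepr]
    have h5 : HasSum (fun n : ℤ => ((‖a n‖ ^ 2 : ℝ) : ℂ) * fourier n x)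
        (inner ℂ (hL0.toLp F) ((hL x).toLp _)) := by
      have e : ∀ n : ℤ, ((‖a n‖ ^ 2 : ℝ) : ℂ) * fourier n x
          = inner ℂ (hL0.toLp F) (fourierBasis (T := T) n)
            * inner ℂ (fourierBasis (T := T) n) ((hL x).toLp _) := fun n => by
        rw [h3, h4, mul_left_comm, Complex.conj_mul', mul_comm]
        push_cast
        rfl
      rw [funext e]
      exact h2
    rw [h1.unique h5, MeasureTheory.L2.inner_def]
    refine integral_congr_ae ?_
    filter_upwards [hL0.coeFn_toLp, (hL x).coeFn_toLp] with t ht ht'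
    rw [ht, ht', RCLike.inner_apply']
  · have h1 := hasSum_sq_fourierCoeff
      (ContinuousMap.toLp (E := ℂ) 2 AddCircle.haarAddCircle ℂ G)
    simp only [hcoef] at h1
    have h2 : ∫ x, ‖G x‖ ^ 2 ∂AddCircle.haarAddCircle
        = ∫ x, ‖(ContinuousMap.toLp (E := ℂ) 2 AddCircle.haarAddCircle ℂ G) x‖ ^ 2
          ∂AddCircle.haarAddCircle := by
      refine integral_congr_ae ?_
      filter_upwards [ContinuousMap.coeFn_toLp (𝕜 := ℂ) (p := 2) AddCircle.haarAddCircle G]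
        with t ht
      rw [ht]
    rw [h2]
    calc _ ≤ ε ^ 2 * ∑' n, ‖a n‖ ^ 2 := by
          rw [← tsum_mul_left]
          refine h1.tsum_eq ▸ Summable.tsum_le_tsum (fun n => ?_) h1.summable (hs2.mul_left _)
          have := pow_le_pow_left₀ (norm_nonneg _) (hε n) 2
          rw [Complex.norm_real, norm_pow, norm_norm, pow_two (‖a n‖ ^ 2)]
          gcongr
      _ ≤ _ := by gcongr

/-! ### Functions that are large on a relatively dense family of intervals -/

/-- The mean of a nonnegative function over `[0, T]` is bounded below if it is at least `c` on an
interval of length `δ` in every window of length `l + 1` inside `[0, T]`. -/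
lemma integral_lower_bound {φ : ℝ → ℝ} (hφ : Continuous φ) (h0 : ∀ x, 0 ≤ φ x)
    {l δ c T : ℝ} (hl : 0 < l) (hδ : 0 < δ) (hδ1 : δ ≤ 1) (hc : 0 ≤ c) (hT : 2 * (l + 1) ≤ T)
    (H : ∀ a, 0 ≤ a → a + (l + 1) ≤ T →
      ∃ τ, a ≤ τ ∧ τ ≤ a + l ∧ ∀ s, τ ≤ s → s ≤ τ + δ → c ≤ φ s) :
    δ * c / (2 * (l + 1)) * T ≤ ∫ x in (0 : ℝ)..T, φ x := by
  have hii : ∀ a b, IntervalIntegrable φ volume a b := fun a b => hφ.intervalIntegrable a b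
  have hblock : ∀ a, 0 ≤ a → a + (l + 1) ≤ T → δ * c ≤ ∫ x in a..(a + (l + 1)), φ x := by
    intro a ha haT
    obtain ⟨τ, h1, h2, h3⟩ := H a ha haT
    calc δ * c = ∫ x in τ..(τ + δ), c := by simp
      _ ≤ ∫ x in τ..(τ + δ), φ x :=
        intervalIntegral.integral_mono_on (by linarith) (by simp) (hii _ _)
          fun x hx => h3 x hx.1 hx.2
      _ ≤ _ := intervalIntegral.integral_mono_interval h1 (by linarith) (by linarith)
          (ae_of_all _ h0) (hii _ _)
  have hN : ∀ N : ℕ, N * (l + 1) ≤ T → N * (δ * c) ≤ ∫ x in (0 : ℝ)..(N * (l + 1)), φ x := by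
    intro N
    induction N with
    | zero => simp
    | succ N ih =>
      intro hNT
      have e : ((N + 1 : ℕ) : ℝ) * (l + 1) = N * (l + 1) + (l + 1) := by push_cast; ring
      rw [e] at hNT ⊢
      have h1 := ih (by linarith)
      have h2 := hblock (N * (l + 1)) (by positivity) hNT
      rw [← intervalIntegral.integral_add_adjacent_intervals (hii 0 (N * (l + 1))) (hii _ _)]
      push_cast
      linarith
  set N := ⌊T / (l + 1)⌋₊
  have hP : 0 < l + 1 := by linarith
  have h1 : N * (l + 1) ≤ T := by
    rw [← le_div_iff₀ hP]; exact Nat.floor_le (div_nonneg (by linarith) hP.le)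
  have h2 : T ≤ N * (l + 1) + (l + 1) := by
    have := (Nat.lt_floor_add_one (T / (l + 1))).le
    rw [div_le_iff₀ hP] at this
    linarith
  have h3 : T / (2 * (l + 1)) ≤ N := by
    rw [div_le_iff₀ (by positivity)]; linarith
  calc δ * c / (2 * (l + 1)) * T = T / (2 * (l + 1)) * (δ * c) := by ring
    _ ≤ N * (δ * c) := by gcongr
    _ ≤ _ := hN N h1
    _ ≤ _ := intervalIntegral.integral_mono_interval le_rfl (by positivity) h1
          (ae_of_all _ h0) (hii _ _)

/-! ### Periodization -/

lemma liftIco_measurable {T : ℝ} [hT : Fact (0 < T)] {f : ℝ → ℂ} (hf : Continuous f) :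
    Measurable (AddCircle.liftIco T 0 f) :=
  (hf.measurable.comp measurable_subtype_coe).comp (AddCircle.measurableEquivIco T 0).measurable

lemma fourierCoeff_liftIco {T : ℝ} [hT : Fact (0 < T)] (f : ℝ → ℂ) (n : ℤ) :
    fourierCoeff (AddCircle.liftIco T 0 f) n
      = ((1 / T : ℝ) : ℂ) * ∫ t in (0 : ℝ)..T, f t * ex (n / T) t := by
  rw [fourierCoeff_eq_intervalIntegral _ _ 0, Complex.real_smul, zero_add]
  congr 1
  refine intervalIntegral.integral_congr_Ioo_of_le hT.out.le fun x hx => ?_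
  rw [AddCircle.liftIco_coe_apply (by rw [zero_add]; exact Set.Ioo_subset_Ico_self hx),
    fourier_coe_apply, smul_eq_mul, mul_comm]
  simp only [ex]
  congr 2
  push_cast
  ring

lemma exists_rep {T : ℝ} [hT : Fact (0 < T)] (t : AddCircle T) :
    ∃ r : ℝ, 0 ≤ r ∧ r < T ∧ (r : AddCircle T) = t :=
  ⟨AddCircle.equivIco T 0 t, (AddCircle.equivIco T 0 t).2.1, by
    simpa using (AddCircle.equivIco T 0 t).2.2, AddCircle.coe_equivIco⟩

lemma liftIco_apply {T : ℝ} [hT : Fact (0 < T)] (f : ℝ → ℂ) {r : ℝ} (h0 : 0 ≤ r) (h1 : r < T) :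
    AddCircle.liftIco T 0 f r = f r :=
  AddCircle.liftIco_coe_apply ⟨h0, by rwa [zero_add]⟩

/-- If the period `T` is itself an almost period, then an almost period `s ∈ [0, T]` of `f` is one
for the periodization. -/
lemma liftIco_almost_period {T : ℝ} [hT : Fact (0 < T)] {f : ℝ → ℂ} {ε s : ℝ}
    (hTf : ∀ x, ‖f (x + T) - f x‖ ≤ ε) (hs : ∀ x, ‖f (x + s) - f x‖ ≤ ε)
    (hs0 : 0 ≤ s) (hsT : s ≤ T) (t : AddCircle T) :
    ‖AddCircle.liftIco T 0 f (t + (s : ℝ)) - AddCircle.liftIco T 0 f t‖ ≤ 2 * ε := by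
  obtain ⟨r, hr0, hrT, rfl⟩ := exists_rep t
  have hε : 0 ≤ ε := (norm_nonneg _).trans (hs 0)
  rw [liftIco_apply f hr0 hrT, ← AddCircle.coe_add]
  rcases lt_or_ge (r + s) T with h | h
  · rw [liftIco_apply f (by linarith) h]
    linarith [hs r]
  · have e : ((r + s : ℝ) : AddCircle T) = ((r + s - T : ℝ) : AddCircle T) := by
      rw [← AddCircle.coe_add_period T (r + s - T), sub_add_cancel]
    rw [e, liftIco_apply f (by linarith) (by linarith)]
    have h1 := hTf (r + s - T)
    rw [sub_add_cancel] at h1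
    calc ‖f (r + s - T) - f r‖ = ‖(f (r + s) - f r) - (f (r + s) - f (r + s - T))‖ := by
          congr 1; ring
      _ ≤ _ := norm_sub_le _ _
      _ ≤ 2 * ε := by linarith [hs r]

lemma integral_circle {T : ℝ} [hT : Fact (0 < T)] (φ : AddCircle T → ℝ) :
    ∫ t, φ t ∂AddCircle.haarAddCircle = T⁻¹ * ∫ t in (0 : ℝ)..T, φ t := by
  rw [AddCircle.integral_haarAddCircle, ← AddCircle.intervalIntegral_preimage T 0, zero_add,
    smul_eq_mul]

/-! ### Uniqueness -/

open scoped ComplexConjugate in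
/-- The contradiction from a nonzero value `f x₀`: the correlation of the periodization is large on a
set of density bounded below, uniformly in `T`, but small in `L²` for large `T`. -/
lemma eq_zero_of_coeff_zero {f : ℝ → ℂ} (hf : BohrAP f) (h0 : ∀ ω, HasFourierCoeff f ω 0)
    (x₀ : ℝ) : f x₀ = 0 := by
  by_contra hx₀
  obtain ⟨M, hM0, hM⟩ := hf.exists_bound
  have hm : 0 < ‖f x₀‖ := norm_pos_iff.2 hx₀
  -- `c₁` bounds the mean of `‖f‖ ^ 2` from below
  obtain ⟨l₁, δ₁, hl₁, hδ₁, hδ₁1, hap₁⟩ := hf.fat_almost_periods (ε := ‖f x₀‖ / 2) (by positivity)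
  set c₁ := δ₁ * (‖f x₀‖ / 2) ^ 2 / (2 * (l₁ + 1)) with hc₁
  have hc₁0 : 0 < c₁ := by positivity
  have hmean : ∀ T, 2 * (l₁ + 1) ≤ T → c₁ * T ≤ ∫ t in (0 : ℝ)..T, ‖f t‖ ^ 2 := by
    intro T hT
    refine integral_lower_bound (φ := fun t => ‖f t‖ ^ 2) (hf.1.norm.pow 2) (fun x => sq_nonneg _) hl₁ hδ₁ hδ₁1
      (c := (‖f x₀‖ / 2) ^ 2) (by positivity) hT fun a _ _ => ?_
    obtain ⟨τ, h1, h2, h3⟩ := hap₁ (a - x₀)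
    refine ⟨τ + x₀, by linarith, by linarith, fun s hs hs' => ?_⟩
    have h4 := h3 (s - x₀) (by linarith) (by linarith) x₀
    rw [add_sub_cancel] at h4
    have h5 := norm_sub_norm_le (f x₀) (f s)
    rw [norm_sub_rev] at h5
    exact pow_le_pow_left₀ (by positivity) (by linarith) 2
  obtain ⟨l, δ, hl, hδ, hδ1, hap⟩ := hf.fat_almost_periods (ε := c₁ / (4 * M)) (by positivity)
  set d := δ * (c₁ / 2) ^ 2 / (2 * (l + 1)) with hd
  have hd0 : 0 < d := by positivity
  set ε := Real.sqrt d / (2 * M) with hε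
  have hεd : ε ^ 2 * M ^ 2 < d := by
    rw [hε, div_pow, Real.sq_sqrt hd0.le]
    field_simp
    norm_num
  have hε0 : 0 < ε := by positivity
  obtain ⟨T₀, hT₀⟩ := eventually_atTop.1 (mean_uniform_freq hf h0 hε0)
  obtain ⟨T, hTge, -, hTap⟩ := hap (max T₀ (max (2 * (l₁ + 1)) (2 * (l + 1))))
  have hTT₀ : T₀ ≤ T := (le_max_left _ _).trans hTge
  have hTl₁ : 2 * (l₁ + 1) ≤ T := ((le_max_left _ _).trans (le_max_right _ _)).trans hTge
  have hTl : 2 * (l + 1) ≤ T := ((le_max_right _ _).trans (le_max_right _ _)).trans hTge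
  have hTpos : 0 < T := by linarith
  have : Fact (0 < T) := ⟨hTpos⟩
  set F := AddCircle.liftIco T 0 f with hF
  have hFm : Measurable F := liftIco_measurable hf.1
  have hFM : ∀ t, ‖F t‖ ≤ M := fun t => by
    obtain ⟨r, hr0, hrT, rfl⟩ := exists_rep t
    rw [hF, liftIco_apply f hr0 hrT]; exact hM r
  have hcoef : ∀ n, ‖fourierCoeff F n‖ ≤ ε := fun n => by
    rw [hF, fourierCoeff_liftIco, norm_mul, Complex.norm_real, Real.norm_of_nonneg (by positivity),
      one_div, inv_mul_le_iff₀ hTpos, mul_comm T]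
    exact hT₀ T hTT₀ _
  obtain ⟨G, hG, hGint⟩ := circle_corr F hFm hFM hcoef
  have hsq : c₁ ≤ ∫ t, ‖F t‖ ^ 2 ∂AddCircle.haarAddCircle := by
    rw [integral_circle (fun t => ‖F t‖ ^ 2), le_inv_mul_iff₀ hTpos, mul_comm]
    refine (hmean T hTl₁).trans_eq ?_
    refine intervalIntegral.integral_congr_Ioo_of_le hTpos.le fun x hx => ?_
    rw [hF, liftIco_apply f hx.1.le hx.2]
  -- the correlation is large at every almost period
  have hGlow : ∀ s, 0 ≤ s → s ≤ T → (∀ x, ‖f (x + s) - f x‖ ≤ c₁ / (4 * M)) →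
      c₁ / 2 ≤ ‖G (s : ℝ)‖ := by
    intro s hs0 hsT hs
    have hint : ∀ y : AddCircle T,
        Integrable (fun t => conj (F t) * F (t + y)) AddCircle.haarAddCircle := fun y =>
      Integrable.of_bound
        ((Complex.continuous_conj.measurable.comp hFm).mul
          (hFm.comp (measurable_id.add_const y))).aestronglyMeasurable (M * M)
        (ae_of_all _ fun t => by
          simp only [norm_mul, RCLike.norm_conj]
          exact mul_le_mul (hFM _) (hFM _) (norm_nonneg _) hM0.le)
    have h1 : G (s : ℝ) - ((∫ t, ‖F t‖ ^ 2 ∂AddCircle.haarAddCircle : ℝ) : ℂ)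
        = ∫ t, conj (F t) * (F (t + (s : ℝ)) - F t) ∂AddCircle.haarAddCircle := by
      rw [hG, ← integral_complex_ofReal]
      have h2 := hint 0
      simp only [add_zero] at h2
      have h3 : ∀ t, ((‖F t‖ ^ 2 : ℝ) : ℂ) = conj (F t) * F t := fun t => by
        rw [Complex.conj_mul']; push_cast; rfl
      simp_rw [h3]
      rw [← integral_sub (hint _) h2]
      congr 1; funext t; ring
    have h2 : ‖∫ t, conj (F t) * (F (t + (s : ℝ)) - F t) ∂AddCircle.haarAddCircle‖
        ≤ c₁ / 2 := by
      have := norm_integral_le_of_norm_le_const (μ := AddCircle.haarAddCircle (T := T))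
        (f := fun t => conj (F t) * (F (t + (s : ℝ)) - F t)) (C := c₁ / 2)
        (ae_of_all _ fun t => by
          rw [norm_mul, RCLike.norm_conj]
          calc _ ≤ M * (2 * (c₁ / (4 * M))) :=
                mul_le_mul (hFM t) (liftIco_almost_period
                  (hTap T le_rfl (by linarith)) hs hs0 hsT t) (norm_nonneg _) hM0.le
            _ = c₁ / 2 := by field_simp; norm_num)
      simpa using this
    rw [← h1] at h2
    have h3 := norm_sub_norm_le ((∫ t, ‖F t‖ ^ 2 ∂AddCircle.haarAddCircle : ℝ) : ℂ) (G (s : ℝ))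
    rw [norm_sub_rev, Complex.norm_real, Real.norm_of_nonneg (hc₁0.le.trans hsq)] at h3
    linarith
  have hGc : Continuous fun s : ℝ => ‖G (s : AddCircle T)‖ ^ 2 :=
    ((G.continuous.comp (AddCircle.continuous_mk' T)).norm).pow 2
  have hbig := integral_lower_bound hGc (fun x => by positivity) hl hδ hδ1
    (c := (c₁ / 2) ^ 2) (by positivity) hTl fun a ha haT => by
      obtain ⟨τ, h1, h2, h3⟩ := hap a
      refine ⟨τ, h1, h2, fun s hs hs' => pow_le_pow_left₀ (by positivity) ?_ 2⟩
      exact hGlow s (by linarith) (by linarith) (h3 s hs hs')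
  rw [integral_circle (fun t => ‖G t‖ ^ 2), inv_mul_le_iff₀ hTpos] at hGint
  have : d * T ≤ ε ^ 2 * M ^ 2 * T := hbig.trans (hGint.trans_eq (mul_comm _ _))
  have := le_of_mul_le_mul_right this hTpos
  linarith

/-! ### Differences of almost periodic functions -/

/-- Two almost periodic functions have common almost periods: a pigeonhole argument on the gaps
between nearby almost periods of `f` and of `g`. -/
lemma BohrAP.sub {f g : ℝ → ℂ} (hf : BohrAP f) (hg : BohrAP g) :
    BohrAP (fun x => f x - g x) := by
  refine ⟨hf.1.sub hg.1, fun ε hε => ?_⟩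
  have hη : 0 < ε / 6 := by positivity
  set η := ε / 6 with hηdef
  obtain ⟨Lf, hLf, hapf⟩ := hf.2 η hη
  obtain ⟨Lg, hLg, hapg⟩ := hg.2 η hη
  obtain ⟨δ, hδ, -, hu⟩ := hg.uniform_cont hη
  choose p hp hpf using hapf
  choose q hq hqg using hapg
  -- the gap `p a - q a` stays bounded, so it falls into finitely many bins of length `δ`
  let b : ℝ → ℤ := fun a => ⌊(p a - q a) / δ⌋
  have hfin : (Set.range b).Finite := by
    refine (Set.finite_Icc ⌊-Lg / δ⌋ ⌊Lf / δ⌋).subset ?_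
    rintro _ ⟨a, rfl⟩
    have h1 := hp a
    have h2 := hq a
    exact ⟨Int.floor_le_floor (by gcongr; linarith [h1.1, h2.2]),
      Int.floor_le_floor (by gcongr; linarith [h1.2, h2.1])⟩
  let r : ℤ → ℝ := Function.invFun b
  have hr : ∀ a, b (r (b a)) = b a := fun a => Function.invFun_eq ⟨a, rfl⟩
  obtain ⟨K, hK⟩ := (hfin.image fun k => |p (r k)|).bddAbove
  have hK' : ∀ a, |p (r (b a))| ≤ K := fun a =>
    hK ⟨b a, ⟨a, rfl⟩, rfl⟩
  have hK0 : 0 ≤ K := (abs_nonneg _).trans (hK' 0)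
  refine ⟨2 * K + Lf, by linarith, fun a => ?_⟩
  set a' := a + K
  set a₀ := r (b a') with ha₀
  have hbin : b a₀ = b a' := hr a'
  have hKa := abs_le.1 (hK' a')
  have hpa := hp a'
  have hdiff : |(p a' - q a') - (p a₀ - q a₀)| ≤ δ := by
    have := Int.abs_sub_lt_one_of_floor_eq_floor hbin.symm
    rw [← sub_div, abs_div, abs_of_pos hδ, div_lt_one hδ] at this
    exact this.le
  refine ⟨p a' - p a₀, ⟨by linarith [hpa.1, hKa.2], by linarith [hpa.2, hKa.1]⟩, fun x => ?_⟩
  have hshort : ∀ (h : ℝ → ℂ) (s t : ℝ), (∀ x, ‖h (x - s) - h x‖ < η) →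
      (∀ x, ‖h (x - t) - h x‖ < η) → ‖h (x - (s - t)) - h x‖ < 2 * η := by
    intro h s t h1 h2
    have e1 := h1 (x + t)
    have e2 := h2 (x + t)
    rw [add_sub_cancel_right] at e2
    have e3 : x + t - s = x - (s - t) := by ring
    rw [e3] at e1
    calc ‖h (x - (s - t)) - h x‖ = ‖(h (x - (s - t)) - h (x + t)) - (h x - h (x + t))‖ := by
          congr 1; ring
      _ ≤ _ := norm_sub_le _ _
      _ < 2 * η := by linarith
  have huc : ∀ u v : ℝ, |u - v| ≤ δ → ‖g u - g v‖ ≤ η := by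
    intro u v h
    rcases le_total v u with hvu | hvu
    · rw [abs_of_nonneg (by linarith)] at h
      simpa using hu (u - v) (by linarith) h v
    · rw [abs_of_nonpos (by linarith)] at h
      rw [norm_sub_rev]
      simpa using hu (v - u) (by linarith) (by linarith) u
  have h1 := hshort f (p a') (p a₀) (hpf a') (hpf a₀)
  have h2 := hshort g (q a') (q a₀) (hqg a') (hqg a₀)
  have h3 := huc (x - (p a' - p a₀)) (x - (q a' - q a₀)) (by
    rw [← abs_neg]; convert hdiff using 2; ring)
  calc ‖f (x - (p a' - p a₀)) - g (x - (p a' - p a₀)) - (f x - g x)‖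
      = ‖(f (x - (p a' - p a₀)) - f x) - ((g (x - (p a' - p a₀)) - g (x - (q a' - q a₀)))
          + (g (x - (q a' - q a₀)) - g x))‖ := by congr 1; ring
    _ ≤ ‖f (x - (p a' - p a₀)) - f x‖ + (‖g (x - (p a' - p a₀)) - g (x - (q a' - q a₀))‖
          + ‖g (x - (q a' - q a₀)) - g x‖) :=
        (norm_sub_le _ _).trans (by gcongr; exact norm_add_le _ _)
    _ < ε := by linarith

lemma HasFourierCoeff.sub {f g : ℝ → ℂ} (hf : Continuous f) (hg : Continuous g) {ω : ℝ} {c d : ℂ}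
    (h1 : HasFourierCoeff f ω c) (h2 : HasFourierCoeff g ω d) :
    HasFourierCoeff (fun x => f x - g x) ω (c - d) := by
  have h := Tendsto.sub h1 h2
  refine h.congr fun L => ?_
  have c1 : Continuous fun t => f t * ex ω t := hf.mul (continuous_ex ω)
  have c2 : Continuous fun t => g t * ex ω t := hg.mul (continuous_ex ω)
  rw [← mul_sub]
  congr 1
  simp only [sub_mul]
  exact (intervalIntegral.integral_sub (c1.intervalIntegrable _ _) (c2.intervalIntegrable _ _)).symm

/-- a Bohr almost periodic function with vanishing Fourier coefficients is
identically zero; equivalently, two Bohr almost periodic functions with the same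
Fourier coefficients coincide. -/
theorem bohrAP_uniqueness :
    (∀ f : ℝ → ℂ, BohrAP f → (∀ ω : ℝ, HasFourierCoeff f ω 0) → ∀ x : ℝ, f x = 0) ∧
    (∀ (f g : ℝ → ℂ) (Fhat : ℝ → ℂ), BohrAP f → BohrAP g →
      (∀ ω : ℝ, HasFourierCoeff f ω (Fhat ω)) →
      (∀ ω : ℝ, HasFourierCoeff g ω (Fhat ω)) → f = g) := by
  refine ⟨fun f hf h0 x => eq_zero_of_coeff_zero hf h0 x, fun f g F hf hg h1 h2 => ?_⟩
  funext x
  refine sub_eq_zero.1 (eq_zero_of_coeff_zero (hf.sub hg) (fun ω => ?_) x)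
  simpa using HasFourierCoeff.sub hf.1 hg.1 (h1 ω) (h2 ω)
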